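/- arXiv:2509.14538 — 3 statements merged into one kernel-verified Lean document; each statement's English description precedes it below -/
import Mathlib

section
/- Let n ≥ 2, λ > 0, k₁, k₂ positive integers, m_j ∈ ℕ (j = 1,…,k₁), n_j ∈ ℕ (j = 1,…,k₂), and points p₁,…,p_{k₁}, q₁,…,q_{k₂} ∈ ℤⁿ. Set g = 4π ∑_{j=1}^{k₁} m_j δ_{p_j} and h = 4π ∑_{j=1}^{k₂} n_j δ_{q_j}. Then the system Δu = λ e^v (e^u − 1) + g, Δv = λ e^u (e^v − 1) + h on ℤⁿ with u(x) → 0 and v(x) → 0 as d(x) → +∞ admits a topological solution (u*, v*) with u* ≤ 0 and v* ≤ 0 on ℤⁿ, satisfying u*, v* ∈ lᵖ(ℤⁿ) for every 1 ≤ p ≤ ∞, and which is maximal among all topological solutions: for every topological solution (u, v) of the system, u ≤ u* and v ≤ v* on ℤⁿ. -/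
/-! Write `U = -u`, `V = -v`, so that the system becomes `ΔU = λ e^{-V}(1 - e^{-U}) - g` and
symmetrically for `V`. On `U, V ≥ 0` it is cooperative, hence is the fixed-point equation of an
explicit monotone map (`step`), a relaxed Jacobi iteration. Iterating from `(0, 0)` gives an
increasing sequence (`iter`) of summable functions lying below every nonnegative fixed point; by
the maximum principle every topological solution is such a fixed point. So the limit of the
iteration, provided it is finite and summable, is the solution sought, and is maximal.

The a priori bound is the heart of the matter. Replace the equation by its massive version
`ΔU = λ e^{-V}(1 - e^{-U}) + ε U - g` with `0 < ε ≤ 1`, whose iterates are bounded by `‖g‖₁ / ε`.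
Summing the equation over `ℤⁿ` kills the Laplacian, so that
`∑ (λ e^{-V}(1 - e^{-U}) + ε U) ≤ ∑ g` (`mass_le`): this bounds the mass uniformly in `ε`, and
makes the limit summable for fixed `ε`. The sum `S = U + V` satisfies the Harnack inequality
`S(y) ≤ M S(x)` for neighbours, with `M = 2n + λ + 1`, and its mass density is at least
`λ e^{-S} S`. If `S > 1` at `x, x + e₁, …, x + N e₁`, then on each of the parallel lines in
direction `e₂` through these points `S` first drops to a value `≤ 1` at a point where
`1/M ≤ S ≤ 1`, which carries mass at least `λ e⁻¹ / M`; here the dimension being at least two is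
used. Hence `N` is bounded independently of `ε`, and Harnack's inequality along the segment gives
`S ≤ M ^ N` everywhere (`exists_bound`). As each iterate depends continuously on `ε`, the bound
persists at `ε = 0`, where the mass bound then becomes an `ℓ¹` bound. -/

open Filter Real

noncomputable section

namespace CS

abbrev Lat (n : ℕ) := Fin n → ℤ

/-- d(x) = ∑ᵢ |xᵢ|, the graph distance to the origin on ℤⁿ. -/
def latDist {n : ℕ} (x : Lat n) : ℕ := ∑ i, (x i).natAbs

/-- x ~ y iff ∑ᵢ |xᵢ − yᵢ| = 1. -/
def adjacent {n : ℕ} (x y : Lat n) : Prop := (∑ i, (x i - y i).natAbs) = 1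

instance {n : ℕ} (x y : Lat n) : Decidable (adjacent x y) :=
  decidable_of_iff ((∑ i, (x i - y i).natAbs) = 1) Iff.rfl

def unitVec {n : ℕ} (i : Fin n) : Lat n := fun j => if j = i then 1 else 0

/-- The graph Laplacian Δu(x) = ∑_{y ~ x} (u(y) − u(x)) on ℤⁿ. -/
def lapl {n : ℕ} (u : Lat n → ℝ) (x : Lat n) : ℝ :=
  ∑ i, (u (x + unitVec i) + u (x - unitVec i) - 2 * u x)

/-- The filter of neighborhoods of infinity (d(x) → +∞) on ℤⁿ. -/
def atInfty (n : ℕ) : Filter (Lat n) := Filter.comap latDist Filter.atTop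

/-- The Dirac mass at p. -/
def dirac {n : ℕ} (p x : Lat n) : ℝ := if x = p then 1 else 0

/-- (u,v) is a topological solution of Δu = λ eᵛ(eᵘ−1) + g, Δv = λ eᵘ(eᵛ−1) + h
with u, v → 0 at infinity. -/
def IsTopSol {n : ℕ} (lam : ℝ) (g h u v : Lat n → ℝ) : Prop :=
  (∀ x, lapl u x = lam * Real.exp (v x) * (Real.exp (u x) - 1) + g x) ∧
  (∀ x, lapl v x = lam * Real.exp (u x) * (Real.exp (v x) - 1) + h x) ∧
  Filter.Tendsto u (atInfty n) (nhds 0) ∧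
  Filter.Tendsto v (atInfty n) (nhds 0)

/-- `ψ(a, b) = a - e^{-b}(1 - e^{-a})`, the nonlinearity made monotone by a linear term. -/
def psi (a b : ℝ) : ℝ := a - exp (-b) * (1 - exp (-a))

/-- The sum of the values of `U` over the neighbours of `x`. -/
def nbr {n : ℕ} (U : Lat n → ℝ) (x : Lat n) : ℝ :=
  ∑ i, (U (x + unitVec i) + U (x - unitVec i))

/-- One relaxed Jacobi step for `ΔU = λ e^{-V}(1 - e^{-U}) + ε U - g`; the relaxation constant
`2n + λ + 1` makes it monotone in `(U, V)` for all `ε ≤ 1`. -/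
def step {n : ℕ} (lam ε : ℝ) (g U V : Lat n → ℝ) (x : Lat n) : ℝ :=
  (nbr U x + (1 - ε) * U x + lam * psi (U x) (V x) + g x) / (2 * n + lam + 1)

/-- The `k`-th iterate from `(0, 0)`: `iter lam ε k g h` is the first component, and
exchanging `g` and `h` gives the second. -/
def iter {n : ℕ} (lam ε : ℝ) : ℕ → (Lat n → ℝ) → (Lat n → ℝ) → Lat n → ℝ
  | 0, _, _ => 0
  | k + 1, g, h => step lam ε g (iter lam ε k g h) (iter lam ε k h g)

/-! ### The nonlinearity -/

lemma psi_mono {a b a' b' : ℝ} (ha : 0 ≤ a) (haa : a ≤ a') (hbb : b ≤ b') (hb : 0 ≤ b) :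
    psi a b ≤ psi a' b' := by
  unfold psi
  have h1 : exp (-b') ≤ exp (-b) := exp_le_exp.2 (by linarith)
  have h2 : exp (-a') ≤ 1 := exp_le_one_iff.2 (by linarith)
  have h3 : exp (-b) ≤ 1 := exp_le_one_iff.2 (by linarith)
  have h4 : exp (-a) ≤ 1 := exp_le_one_iff.2 (by linarith)
  -- `e^{-a} - e^{-a'} ≤ a' - a` because `e^{a - a'} ≥ 1 + a - a'`
  have h5 : exp (-a) - exp (-a') ≤ a' - a := by
    have e : exp (-a') = exp (-a) * exp (a - a') := by rw [← exp_add]; congr 1; ring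
    have h6 := add_one_le_exp (a - a')
    have h7 := exp_pos (-a)
    rw [e]; nlinarith
  have h8 : exp (-a') ≤ exp (-a) := exp_le_exp.2 (by linarith)
  have h9 := exp_pos (-b)
  nlinarith [mul_nonneg (sub_nonneg.2 h1) (sub_nonneg.2 h2),
    mul_nonneg (sub_nonneg.2 h3) (sub_nonneg.2 h8)]

lemma psi_nonneg {a b : ℝ} (ha : 0 ≤ a) (hb : 0 ≤ b) : 0 ≤ psi a b := by
  have := psi_mono le_rfl ha hb le_rfl
  simpa [psi] using this

lemma psi_le {a b : ℝ} (ha : 0 ≤ a) : psi a b ≤ a := by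
  have h1 : exp (-a) ≤ 1 := exp_le_one_iff.2 (by linarith)
  have := mul_nonneg (exp_pos (-b)).le (sub_nonneg.2 h1)
  unfold psi; linarith

lemma density_ge (a b : ℝ) : exp (-(a + b)) * a ≤ exp (-b) * (1 - exp (-a)) := by
  have e : exp (-b) * (1 - exp (-a)) = exp (-(a + b)) * (exp a - 1) := by
    rw [mul_sub, mul_sub, ← exp_add, ← exp_add]; ring_nf
  rw [e]
  exact mul_le_mul_of_nonneg_left (by linarith [add_one_le_exp a]) (exp_pos _).le

/-! ### Neighbour sums and the iteration -/

section iteration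

variable {n : ℕ} {lam ε : ℝ}

lemma lapl_eq_nbr (U : Lat n → ℝ) (x : Lat n) : lapl U x = nbr U x - 2 * n * U x := by
  simp [lapl, nbr, Finset.sum_sub_distrib]; ring

lemma nbr_mono {U U' : Lat n → ℝ} (h : ∀ x, U x ≤ U' x) (x : Lat n) : nbr U x ≤ nbr U' x :=
  Finset.sum_le_sum fun _ _ => add_le_add (h _) (h _)

lemma nbr_nonneg {U : Lat n → ℝ} (h : ∀ x, 0 ≤ U x) (x : Lat n) : 0 ≤ nbr U x :=
  Finset.sum_nonneg fun _ _ => add_nonneg (h _) (h _)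

lemma nbr_ge {U : Lat n → ℝ} (h : ∀ x, 0 ≤ U x) (x : Lat n) (i : Fin n) :
    U (x + unitVec i) + U (x - unitVec i) ≤ nbr U x :=
  Finset.single_le_sum (f := fun i => U (x + unitVec i) + U (x - unitVec i))
    (fun _ _ => add_nonneg (h _) (h _)) (Finset.mem_univ i)

lemma hasSum_nbr {U : Lat n → ℝ} (h : Summable U) : HasSum (nbr U) (2 * n * ∑' x, U x) := by
  have : (2 * n * ∑' x, U x : ℝ) = ∑ i : Fin n, (∑' x, U x + ∑' x, U x) := by
    simp; ring
  rw [this]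
  refine hasSum_sum fun i _ => HasSum.add ?_ ?_
  · exact (Equiv.addRight (unitVec i)).hasSum_iff.2 h.hasSum
  · exact (Equiv.subRight (unitVec i)).hasSum_iff.2 h.hasSum

lemma step_mono (hlam : 0 < lam) (hε1 : ε ≤ 1) {g U V U' V' : Lat n → ℝ}
    (hU : ∀ x, 0 ≤ U x) (hV : ∀ x, 0 ≤ V x) (hUU : ∀ x, U x ≤ U' x) (hVV : ∀ x, V x ≤ V' x)
    (x : Lat n) : step lam ε g U V x ≤ step lam ε g U' V' x := by
  unfold step
  have h1 := psi_mono (hU x) (hUU x) (hVV x) (hV x)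
  have h2 := nbr_mono hUU x
  have h3 := mul_le_mul_of_nonneg_left (hUU x) (sub_nonneg.2 hε1)
  gcongr

lemma iter_nonneg (hlam : 0 < lam) (hε1 : ε ≤ 1) (k : ℕ) : ∀ {g h : Lat n → ℝ},
    (∀ x, 0 ≤ g x) → (∀ x, 0 ≤ h x) → ∀ x, 0 ≤ iter lam ε k g h x := by
  induction k with
  | zero => intros; simp [iter]
  | succ k ih =>
    intro g h hg hh x
    have h1 := nbr_nonneg (ih hg hh) x
    have h2 := psi_nonneg (ih hg hh x) (ih hh hg x)
    have h3 := mul_nonneg (sub_nonneg.2 hε1) (ih hg hh x)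
    have h4 := hg x
    simp only [iter, step]
    positivity

lemma iter_le_succ (hlam : 0 < lam) (hε1 : ε ≤ 1) (k : ℕ) : ∀ {g h : Lat n → ℝ},
    (∀ x, 0 ≤ g x) → (∀ x, 0 ≤ h x) →
    ∀ x, iter lam ε k g h x ≤ iter lam ε (k + 1) g h x := by
  induction k with
  | zero => intro g h hg hh x; exact iter_nonneg hlam hε1 1 hg hh x
  | succ k ih =>
    intro g h hg hh x
    exact step_mono hlam hε1 (iter_nonneg hlam hε1 k hg hh) (iter_nonneg hlam hε1 k hh hg)
      (ih hg hh) (ih hh hg) x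

lemma iter_mono (hlam : 0 < lam) (hε1 : ε ≤ 1) {g h : Lat n → ℝ}
    (hg : ∀ x, 0 ≤ g x) (hh : ∀ x, 0 ≤ h x) (x : Lat n) :
    Monotone fun k => iter lam ε k g h x :=
  monotone_nat_of_le_succ fun k => iter_le_succ hlam hε1 k hg hh x

lemma iter_le_fixed (hlam : 0 < lam) (hε1 : ε ≤ 1) (k : ℕ) : ∀ {g h U V : Lat n → ℝ},
    (∀ x, 0 ≤ g x) → (∀ x, 0 ≤ h x) → (∀ x, 0 ≤ U x) → (∀ x, 0 ≤ V x) →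
    (∀ x, U x = step lam ε g U V x) → (∀ x, V x = step lam ε h V U x) →
    ∀ x, iter lam ε k g h x ≤ U x := by
  induction k with
  | zero => intro g h U V hg hh hU hV _ _ x; exact hU x
  | succ k ih =>
    intro g h U V hg hh hU hV eU eV x
    rw [eU x]
    exact step_mono hlam hε1 (iter_nonneg hlam hε1 k hg hh) (iter_nonneg hlam hε1 k hh hg)
      (ih hg hh hU hV eU eV) (ih hh hg hV hU eV eU) x

lemma summable_iter (hlam : 0 < lam) (hε1 : ε ≤ 1) (k : ℕ) : ∀ {g h : Lat n → ℝ},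
    (∀ x, 0 ≤ g x) → (∀ x, 0 ≤ h x) → Summable g → Summable h →
    Summable (iter lam ε k g h) := by
  induction k with
  | zero => intros; exact summable_zero
  | succ k ih =>
    intro g h hg hh sg sh
    have s := ih hg hh sg sh
    have p : Summable fun x => psi (iter lam ε k g h x) (iter lam ε k h g x) :=
      Summable.of_nonneg_of_le
        (fun x => psi_nonneg (iter_nonneg hlam hε1 k hg hh x) (iter_nonneg hlam hε1 k hh hg x))
        (fun x => psi_le (iter_nonneg hlam hε1 k hg hh x)) s
    exact ((((hasSum_nbr s).summable.add (s.mul_left _)).add (p.mul_left _)).add sg).div_const _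

lemma iter_le_const (hlam : 0 < lam) (hε : 0 < ε) (hε1 : ε ≤ 1) (k : ℕ) :
    ∀ {g h : Lat n → ℝ}, (∀ x, 0 ≤ g x) → (∀ x, 0 ≤ h x) → Summable g →
    ∀ x, iter lam ε k g h x ≤ (∑' y, g y) / ε := by
  induction k with
  | zero => intro g h hg hh sg x; simpa [iter] using div_nonneg (tsum_nonneg hg) hε.le
  | succ k ih =>
    intro g h hg hh sg x
    have h1 := nbr_mono (U' := fun _ => (∑' y, g y) / ε) (ih hg hh sg) x
    have h2 := psi_le (b := iter lam ε k h g x) (iter_nonneg hlam hε1 k hg hh x)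
    have h3 := mul_le_mul_of_nonneg_left (ih hg hh sg x) (sub_nonneg.2 hε1)
    have h4 : g x ≤ ∑' y, g y := sg.le_tsum x fun y _ => hg y
    have h5 := mul_le_mul_of_nonneg_left (h2.trans (ih hg hh sg x)) hlam.le
    have h6 : ε * ((∑' y, g y) / ε) = ∑' y, g y := by field_simp
    have h7 : nbr (fun _ : Lat n => (∑' y, g y) / ε) x = 2 * n * ((∑' y, g y) / ε) := by
      simp [nbr]; ring
    simp only [iter, step]
    rw [div_le_iff₀ (by positivity)]
    linarith

/-- Summing `U ≤ step U V` over the lattice: the Laplacian contributes nothing. -/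
lemma mass_le (hlam : 0 < lam) (hε : 0 ≤ ε) (hε1 : ε ≤ 1) {g h : Lat n → ℝ}
    (hg : ∀ x, 0 ≤ g x) (hh : ∀ x, 0 ≤ h x) (sg : Summable g) (sh : Summable h) (k : ℕ)
    (F : Finset (Lat n)) :
    ∑ x ∈ F, (lam * (exp (-iter lam ε k h g x) * (1 - exp (-iter lam ε k g h x)))
      + ε * iter lam ε k g h x) ≤ ∑' x, g x := by
  set U := iter lam ε k g h with hU
  set V := iter lam ε k h g with hV
  have s : Summable U := summable_iter hlam hε1 k hg hh sg sh
  have U0 : ∀ x, 0 ≤ U x := iter_nonneg hlam hε1 k hg hh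
  have hs : HasSum (fun x => nbr U x - 2 * n * U x + g x) (∑' x, g x) := by
    have := ((hasSum_nbr s).sub (s.hasSum.mul_left (2 * n : ℝ))).add sg.hasSum
    simpa using this
  have le : ∀ x, lam * (exp (-V x) * (1 - exp (-U x))) + ε * U x
      ≤ nbr U x - 2 * n * U x + g x := by
    intro x
    have h1 : U x ≤ step lam ε g U V x := iter_le_succ hlam hε1 k hg hh x
    unfold step psi at h1
    rw [le_div_iff₀ (by positivity)] at h1
    linarith
  have nn : ∀ x, 0 ≤ lam * (exp (-V x) * (1 - exp (-U x))) + ε * U x := by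
    intro x
    have h1 : 0 ≤ 1 - exp (-U x) := sub_nonneg.2 (exp_le_one_iff.2 (by linarith [U0 x]))
    have := U0 x
    positivity
  calc _ ≤ ∑ x ∈ F, (nbr U x - 2 * n * U x + g x) := Finset.sum_le_sum fun x _ => le x
    _ ≤ ∑' x, g x := sum_le_hasSum F (fun x _ => (nn x).trans (le x)) hs

lemma harnack_step (hlam : 0 < lam) (hε1 : ε ≤ 1) {g h : Lat n → ℝ}
    (hg : ∀ x, 0 ≤ g x) (hh : ∀ x, 0 ≤ h x) (k : ℕ) (x : Lat n) (i : Fin n) :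
    iter lam ε k g h (x + unitVec i) + iter lam ε k g h (x - unitVec i)
      ≤ (2 * n + lam + 1) * iter lam ε (k + 1) g h x := by
  have h0 := iter_nonneg hlam hε1 k hg hh
  have h1 := nbr_ge h0 x i
  have h2 := psi_nonneg (h0 x) (iter_nonneg hlam hε1 k hh hg x)
  have h3 := mul_nonneg (sub_nonneg.2 hε1) (h0 x)
  have h4 := mul_nonneg hlam.le h2
  simp only [iter, step]
  rw [mul_div_cancel₀ _ (by positivity)]
  linarith [hg x]

lemma continuous_iter (lam : ℝ) (k : ℕ) : ∀ (g h : Lat n → ℝ) (x : Lat n),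
    Continuous fun ε => iter lam ε k g h x := by
  induction k with
  | zero => intros; exact continuous_const
  | succ k ih =>
    intro g h x
    have := ih g h
    have := ih h g
    simp only [iter, step, nbr, psi]
    fun_prop

lemma tendsto_iter (hlam : 0 < lam) (hε1 : ε ≤ 1) {g h : Lat n → ℝ}
    (hg : ∀ x, 0 ≤ g x) (hh : ∀ x, 0 ≤ h x) {B : ℝ} (hB : ∀ k x, iter lam ε k g h x ≤ B) :
    ∃ U : Lat n → ℝ, (∀ x, Tendsto (fun k => iter lam ε k g h x) atTop (nhds (U x))) ∧
      ∀ k x, iter lam ε k g h x ≤ U x := by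
  have bdd : ∀ x, BddAbove (Set.range fun k => iter lam ε k g h x) := fun x =>
    ⟨B, by rintro _ ⟨k, rfl⟩; exact hB k x⟩
  exact ⟨fun x => ⨆ k, iter lam ε k g h x,
    fun x => tendsto_atTop_ciSup (iter_mono hlam hε1 hg hh x) (bdd x),
    fun k x => le_ciSup (bdd x) k⟩

end iteration

/-! ### The a priori bound -/

section bound

variable {n : ℕ} {lam ε : ℝ}

/-- A function `S` with a one-sided Harnack inequality drops to a value `≤ 1` within `N` steps in
direction `e_{i₁}`. Otherwise each of the `N + 1` distinct rays `x + j e_{i₁} + ℕ e_{i₂}`, along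
which the summable `S` tends to zero, has a first point where `S ≤ 1`, and there `S ≥ 1 / M`; these
points together carry more than the total mass `K` of the density `μ`. -/
lemma exists_exit {i₁ i₂ : Fin n} (hi : i₁ ≠ i₂) {S μ : Lat n → ℝ} {M c K : ℝ} {N : ℕ}
    (hM : 0 < M)
    (harn : ∀ x i, S (x - unitVec i) ≤ M * S x)
    (sS : Summable S)
    (hμ : ∀ x, 1 / M ≤ S x → S x ≤ 1 → c ≤ μ x)
    (hK : ∀ F : Finset (Lat n), ∑ x ∈ F, μ x ≤ K) (hN : K < (N + 1) * c) (x : Lat n) :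
    ∃ j : ℕ, j ≤ N ∧ S (x + j • unitVec i₁) ≤ 1 := by
  by_contra! hcon
  have coord1 : ∀ j t : ℕ, (x + j • unitVec i₁ + t • unitVec i₂ : Lat n) i₁ = x i₁ + j := by
    intro j t; simp [unitVec, hi]
  have coord2 : ∀ j t : ℕ, (x + j • unitVec i₁ + t • unitVec i₂ : Lat n) i₂ = x i₂ + t := by
    intro j t; simp [unitVec, hi.symm]
  have ex : ∀ j : ℕ, ∃ t : ℕ, S (x + j • unitVec i₁ + t • unitVec i₂) ≤ 1 := by
    intro j
    have inj : Function.Injective fun t : ℕ => x + j • unitVec i₁ + t • unitVec i₂ := by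
      intro a b hab
      have := congrFun hab i₂
      simp only [coord2] at this
      omega
    have := (sS.comp_injective inj).tendsto_atTop_zero
    exact (this.eventually (ge_mem_nhds (zero_lt_one))).exists
  classical
  let t : ℕ → ℕ := fun j => Nat.find (ex j)
  let y : ℕ → Lat n := fun j => x + j • unitVec i₁ + t j • unitVec i₂
  have yinj : Function.Injective y := by
    intro a b hab
    have := congrFun hab i₁
    simp only [y, coord1] at this
    omega
  have yc : ∀ j ≤ N, c ≤ μ (y j) := by
    intro j hj
    have hle : S (y j) ≤ 1 := Nat.find_spec (ex j)
    have tpos : t j ≠ 0 := by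
      intro h0
      have := hcon j hj
      simp only [y, h0, zero_smul, add_zero] at hle
      linarith
    obtain ⟨s, hs⟩ := Nat.exists_eq_succ_of_ne_zero tpos
    have hlt : 1 < S (x + j • unitVec i₁ + s • unitVec i₂) :=
      not_le.1 (Nat.find_min (ex j) (show s < t j by omega))
    have e : y j - unitVec i₂ = x + j • unitVec i₁ + s • unitVec i₂ := by
      simp only [y, hs, Nat.succ_eq_add_one, add_smul, one_smul]; abel
    have h1 := harn (y j) i₂
    rw [e] at h1
    refine hμ _ ?_ hle
    rw [div_le_iff₀ hM]; linarith
  have h1 := hK ((Finset.range (N + 1)).image y)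
  rw [Finset.sum_image (fun a _ b _ h => yinj h)] at h1
  have h2 : ∑ j ∈ Finset.range (N + 1), c ≤ ∑ j ∈ Finset.range (N + 1), μ (y j) :=
    Finset.sum_le_sum fun j hj => yc j (by simpa [Nat.lt_succ_iff] using hj)
  simp at h2
  linarith

/-- The iterates of the massive problem are bounded uniformly in `ε`, `k` and the position. -/
lemma exists_bound (hn : 2 ≤ n) (hlam : 0 < lam) {g h : Lat n → ℝ}
    (hg : ∀ x, 0 ≤ g x) (hh : ∀ x, 0 ≤ h x) (sg : Summable g) (sh : Summable h) :
    ∃ B : ℝ, ∀ ε : ℝ, 0 < ε → ε ≤ 1 → ∀ k x,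
      iter lam ε k g h x ≤ B ∧ iter lam ε k h g x ≤ B := by
  set M : ℝ := 2 * n + lam + 1 with hMdef
  have hM : 1 ≤ M := by have : (0 : ℝ) ≤ n := by positivity
                        linarith
  set c : ℝ := lam * exp (-1) / M with hc
  have cpos : 0 < c := by positivity
  set K : ℝ := ∑' x, g x + ∑' x, h x with hKdef
  obtain ⟨N, hN⟩ := exists_nat_gt (K / c)
  have hN' : K < (N + 1) * c := by
    rw [div_lt_iff₀ cpos] at hN; linarith
  refine ⟨M ^ N, fun ε hε hε1 => ?_⟩
  obtain ⟨U, tU, leU⟩ := tendsto_iter hlam hε1 hg hh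
    (fun k x => iter_le_const hlam hε hε1 k hg hh sg x)
  obtain ⟨V, tV, leV⟩ := tendsto_iter hlam hε1 hh hg
    (fun k x => iter_le_const hlam hε hε1 k hh hg sh x)
  have U0 : ∀ x, 0 ≤ U x := fun x => leU 0 x
  have V0 : ∀ x, 0 ≤ V x := fun x => leV 0 x
  set S : Lat n → ℝ := fun x => U x + V x with hS
  set μ : Lat n → ℝ := fun x =>
    (lam * (exp (-V x) * (1 - exp (-U x))) + ε * U x) +
    (lam * (exp (-U x) * (1 - exp (-V x))) + ε * V x) with hμdef
  have hK : ∀ F : Finset (Lat n), ∑ x ∈ F, μ x ≤ K := by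
    intro F
    simp only [hμdef, Finset.sum_add_distrib (s := F)
      (f := fun x => lam * (exp (-V x) * (1 - exp (-U x))) + ε * U x)]
    refine add_le_add ?_ ?_
    · refine le_of_tendsto' (x := atTop) (tendsto_finsetSum F fun x _ => ?_)
        (fun k => mass_le hlam hε.le hε1 hg hh sg sh k F)
      exact ((((continuous_exp.tendsto _).comp (tV x).neg).mul
        (tendsto_const_nhds.sub ((continuous_exp.tendsto _).comp (tU x).neg))).const_mul
        lam).add ((tU x).const_mul ε)
    · refine le_of_tendsto' (x := atTop) (tendsto_finsetSum F fun x _ => ?_)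
        (fun k => mass_le hlam hε.le hε1 hh hg sh sg k F)
      exact ((((continuous_exp.tendsto _).comp (tU x).neg).mul
        (tendsto_const_nhds.sub ((continuous_exp.tendsto _).comp (tV x).neg))).const_mul
        lam).add ((tV x).const_mul ε)
  have hμS : ∀ x, lam * exp (-S x) * S x + ε * S x ≤ μ x := by
    intro x
    have h1 := mul_le_mul_of_nonneg_left (density_ge (U x) (V x)) hlam.le
    have h2 := mul_le_mul_of_nonneg_left (density_ge (V x) (U x)) hlam.le
    rw [add_comm (V x)] at h2
    simp only [hμdef, hS]
    linarith
  have S0 : ∀ x, 0 ≤ S x := fun x => add_nonneg (U0 x) (V0 x)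
  have sS : Summable S := by
    refine summable_of_sum_le (c := K / ε) S0 fun F => ?_
    rw [le_div_iff₀ hε, Finset.sum_mul]
    refine (Finset.sum_le_sum fun x _ => ?_).trans (hK F)
    have := mul_nonneg (mul_nonneg hlam.le (exp_pos (-S x)).le) (S0 x)
    linarith [hμS x]
  have harn : ∀ x i, S (x + unitVec i) + S (x - unitVec i) ≤ M * S x := by
    intro x i
    have a := le_of_tendsto' ((tU (x + unitVec i)).add (tU (x - unitVec i)))
      (fun k => (harnack_step hlam hε1 hg hh k x i).trans
        (mul_le_mul_of_nonneg_left (leU (k + 1) x) (by linarith)))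
    have b := le_of_tendsto' ((tV (x + unitVec i)).add (tV (x - unitVec i)))
      (fun k => (harnack_step hlam hε1 hh hg k x i).trans
        (mul_le_mul_of_nonneg_left (leV (k + 1) x) (by linarith)))
    simp only [hS]
    linarith
  have harn' : ∀ x i, S (x - unitVec i) ≤ M * S x := fun x i => by
    linarith [harn x i, S0 (x + unitVec i)]
  have hμ : ∀ x, 1 / M ≤ S x → S x ≤ 1 → c ≤ μ x := by
    intro x h1 h2
    have h3 : exp (-1) ≤ exp (-S x) := exp_le_exp.2 (by linarith)
    have h4 : c ≤ lam * exp (-S x) * S x := by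
      calc c = lam * exp (-1) * (1 / M) := by rw [hc]; ring
        _ ≤ _ := by gcongr
    linarith [hμS x, mul_nonneg hε.le (S0 x)]
  let i₁ : Fin n := ⟨0, by omega⟩
  let i₂ : Fin n := ⟨1, by omega⟩
  have hi : i₁ ≠ i₂ := by simp [i₁, i₂]
  have chain : ∀ (j : ℕ) (x : Lat n), S x ≤ M ^ j * S (x + j • unitVec i₁) := by
    intro j
    induction j with
    | zero => intro x; simp
    | succ j ih =>
      intro x
      have h1 := harn' (x + (j + 1) • unitVec i₁) i₁
      have e : x + (j + 1) • unitVec i₁ - unitVec i₁ = x + j • unitVec i₁ := by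
        rw [add_smul, one_smul]; abel
      rw [e] at h1
      calc S x ≤ M ^ j * S (x + j • unitVec i₁) := ih x
        _ ≤ M ^ j * (M * S (x + (j + 1) • unitVec i₁)) := by gcongr
        _ = _ := by ring
  have SB : ∀ x, S x ≤ M ^ N := by
    intro x
    obtain ⟨j, hj, hj1⟩ := exists_exit hi (by linarith) harn' sS hμ hK hN' x
    calc S x ≤ M ^ j * S (x + j • unitVec i₁) := chain j x
      _ ≤ M ^ j * 1 := by gcongr
      _ ≤ M ^ N := by rw [mul_one]; exact pow_le_pow_right₀ hM hj
  intro k x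
  have := SB x
  simp only [hS] at this
  exact ⟨by linarith [leU k x, V0 x], by linarith [leV k x, U0 x]⟩

lemma exists_bound_zero (hn : 2 ≤ n) (hlam : 0 < lam) {g h : Lat n → ℝ}
    (hg : ∀ x, 0 ≤ g x) (hh : ∀ x, 0 ≤ h x) (sg : Summable g) (sh : Summable h) :
    ∃ B : ℝ, ∀ k x, iter lam 0 k g h x ≤ B ∧ iter lam 0 k h g x ≤ B := by
  obtain ⟨B, hB⟩ := exists_bound hn hlam hg hh sg sh
  have ev : ∀ᶠ ε : ℝ in nhdsWithin 0 (Set.Ioi 0), 0 < ε ∧ ε ≤ 1 := by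
    filter_upwards [Ioc_mem_nhdsGT (zero_lt_one' ℝ)] with ε hε using hε
  refine ⟨B, fun k x => ⟨?_, ?_⟩⟩
  · exact le_of_tendsto (((continuous_iter lam k g h x).tendsto 0).mono_left nhdsWithin_le_nhds)
      (ev.mono fun ε hε => (hB ε hε.1 hε.2 k x).1)
  · exact le_of_tendsto (((continuous_iter lam k h g x).tendsto 0).mono_left nhdsWithin_le_nhds)
      (ev.mono fun ε hε => (hB ε hε.1 hε.2 k x).2)

/-- At `ε = 0` the sup bound turns the mass bound into an `ℓ¹` bound on the limit. -/
lemma summable_limit (hlam : 0 < lam) {g h : Lat n → ℝ}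
    (hg : ∀ x, 0 ≤ g x) (hh : ∀ x, 0 ≤ h x) (sg : Summable g) (sh : Summable h) {B : ℝ}
    (hB : ∀ k x, iter lam 0 k g h x ≤ B ∧ iter lam 0 k h g x ≤ B) {U : Lat n → ℝ}
    (tU : ∀ x, Tendsto (fun k => iter lam 0 k g h x) atTop (nhds (U x)))
    (U0 : ∀ x, 0 ≤ U x) : Summable U := by
  have cpos : 0 < lam * exp (-(B + B)) := by positivity
  refine summable_of_sum_le (c := (∑' x, g x) / (lam * exp (-(B + B)))) U0 fun F => ?_
  refine le_of_tendsto' (tendsto_finsetSum F fun x _ => tU x) fun k => ?_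
  rw [le_div_iff₀ cpos, Finset.sum_mul]
  refine (Finset.sum_le_sum fun x _ => ?_).trans
    (mass_le hlam le_rfl zero_le_one hg hh sg sh k F)
  have h0 := iter_nonneg hlam zero_le_one k hg hh x
  have h1 := density_ge (iter lam 0 k g h x) (iter lam 0 k h g x)
  have h2 : exp (-(B + B)) ≤ exp (-(iter lam 0 k g h x + iter lam 0 k h g x)) :=
    exp_le_exp.2 (by linarith [(hB k x).1, (hB k x).2])
  calc iter lam 0 k g h x * (lam * exp (-(B + B)))
      = lam * (exp (-(B + B)) * iter lam 0 k g h x) := by ring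
    _ ≤ lam * (exp (-(iter lam 0 k g h x + iter lam 0 k h g x)) * iter lam 0 k g h x) := by
        gcongr
    _ ≤ _ := by rw [zero_mul, add_zero]; gcongr

end bound

/-! ### Fixed points and topological solutions -/

section solutions

variable {n : ℕ} {lam : ℝ}

lemma limit_fixed {g h U V : Lat n → ℝ}
    (tU : ∀ x, Tendsto (fun k => iter lam 0 k g h x) atTop (nhds (U x)))
    (tV : ∀ x, Tendsto (fun k => iter lam 0 k h g x) atTop (nhds (V x))) (x : Lat n) :
    U x = step lam 0 g U V x := by
  refine tendsto_nhds_unique ((tendsto_add_atTop_iff_nat 1).2 (tU x)) ?_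
  simp only [iter, step, nbr, psi]
  refine Tendsto.div_const (((Tendsto.add ?_ ((tU x).const_mul _)).add ?_).add_const _) _
  · exact tendsto_finsetSum _ fun i _ => (tU _).add (tU _)
  · exact ((tU x).sub (((continuous_exp.tendsto _).comp (tV x).neg).mul
      (tendsto_const_nhds.sub ((continuous_exp.tendsto _).comp (tU x).neg)))).const_mul lam

/-- The fixed points of `step` at `ε = 0` are the solutions of the first equation, up to sign. -/
lemma fixed_iff (hlam : 0 < lam) (g u v : Lat n → ℝ) (x : Lat n) :
    -u x = step lam 0 g (fun y => -u y) (fun y => -v y) x ↔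
      lapl u x = lam * exp (v x) * (exp (u x) - 1) + g x := by
  have e : nbr (fun y => -u y) x = -nbr u x := by
    simp only [nbr, ← Finset.sum_neg_distrib]
    exact Finset.sum_congr rfl fun i _ => by ring
  rw [lapl_eq_nbr, step, eq_div_iff (by positivity), e, psi, neg_neg, neg_neg]
  constructor <;> intro H <;> linarith

lemma finite_latDist_lt (R : ℕ) : {x : Lat n | latDist x < R}.Finite := by
  refine (Set.finite_Icc (fun _ => -(R : ℤ)) (fun _ => (R : ℤ)) : (Set.Icc _ _ : Set (Lat n)).Finite).subset
    fun x hx => ?_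
  have : ∀ i, (x i).natAbs < R := fun i =>
    (Finset.single_le_sum (f := fun i => (x i).natAbs) (fun _ _ => Nat.zero_le _)
      (Finset.mem_univ i)).trans_lt hx
  constructor <;> intro i <;> have := this i <;> simp only <;> omega

lemma atInfty_eq_cofinite : atInfty n = cofinite := by
  apply le_antisymm
  · refine le_cofinite_iff_eventually_ne.2 fun a => ?_
    have := (tendsto_comap (f := latDist (n := n)) (x := atTop)).eventually_gt_atTop (latDist a)
    exact this.mono fun x hx h => by simp [h] at hx
  · refine tendsto_iff_comap.1 (tendsto_atTop.2 fun R => ?_)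
    have := finite_latDist_lt (n := n) R
    rw [eventually_cofinite]
    simpa using this

/-- The maximum principle: at a positive maximum of `u` the Laplacian is nonpositive while the
right-hand side is positive, whatever `v` is. -/
lemma nonpos_of_sol (hlam : 0 < lam) {g u v : Lat n → ℝ} (hg : ∀ x, 0 ≤ g x)
    (eq : ∀ x, lapl u x = lam * exp (v x) * (exp (u x) - 1) + g x)
    (tu : Tendsto u (atInfty n) (nhds 0)) (x : Lat n) : u x ≤ 0 := by
  by_contra! hx
  rw [atInfty_eq_cofinite] at tu
  have fin : {y | u x ≤ u y}.Finite := by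
    have := tu.eventually (gt_mem_nhds hx)
    rw [eventually_cofinite] at this
    simpa using this
  obtain ⟨z, hz, hmax⟩ := fin.exists_maximalFor u _ ⟨x, le_refl (u x)⟩
  have hmax' : ∀ y, u y ≤ u z := by
    intro y
    by_contra! hy
    have hz' : u x ≤ u z := hz
    have := hmax (show u x ≤ u y by linarith) hy.le
    linarith
  have hz' : u x ≤ u z := hz
  have h1 : lapl u z ≤ 0 := Finset.sum_nonpos fun i _ => by
    linarith [hmax' (z + unitVec i), hmax' (z - unitVec i)]
  have h2 : 0 < exp (u z) - 1 := by linarith [add_one_le_exp (u z)]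
  have h3 : 0 < lam * exp (v z) * (exp (u z) - 1) := by positivity
  linarith [eq z, hg z]

lemma memlp_of_summable {U : Lat n → ℝ} (hs : Summable U) {pp : ENNReal} (h : 1 ≤ pp) :
    Memℓp (fun x => -U x) pp := by
  refine Memℓp.of_exponent_ge (q := 1) (memℓp_gen ?_) h
  simpa using hs.abs

end solutions

lemma source_nonneg {n k : ℕ} (m : Fin k → ℕ) (p : Fin k → Lat n) (x : Lat n) :
    0 ≤ 4 * Real.pi * ∑ j, (m j : ℝ) * dirac (p j) x := by
  have : 0 ≤ ∑ j, (m j : ℝ) * dirac (p j) x := Finset.sum_nonneg fun j _ => by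
    unfold dirac; split_ifs <;> simp
  positivity

lemma source_summable {n k : ℕ} (m : Fin k → ℕ) (p : Fin k → Lat n) :
    Summable fun x => 4 * Real.pi * ∑ j, (m j : ℝ) * dirac (p j) x := by
  refine Summable.mul_left _ (summable_sum fun j _ => Summable.mul_left _ ?_)
  refine summable_of_ne_finset_zero (s := {p j}) fun x hx => ?_
  simp at hx
  simp [dirac, hx]

/-- existence of a maximal topological solution (u*, v*), with
u* ≤ 0, v* ≤ 0, belonging to lᵖ(ℤⁿ) for all 1 ≤ p ≤ ∞. -/
theorem existence_maximal_topological_solution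
    {n : ℕ} (hn : 2 ≤ n) (lam : ℝ) (hlam : 0 < lam)
    {k₁ k₂ : ℕ} (hk₁ : 0 < k₁) (hk₂ : 0 < k₂)
    (m : Fin k₁ → ℕ) (nn : Fin k₂ → ℕ)
    (p : Fin k₁ → Lat n) (q : Fin k₂ → Lat n)
    (g h : Lat n → ℝ)
    (hg : g = fun x => 4 * Real.pi * ∑ j, (m j : ℝ) * dirac (p j) x)
    (hh : h = fun x => 4 * Real.pi * ∑ j, (nn j : ℝ) * dirac (q j) x) :
    ∃ ustar vstar : Lat n → ℝ,
      IsTopSol lam g h ustar vstar ∧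
      (∀ x, ustar x ≤ 0) ∧ (∀ x, vstar x ≤ 0) ∧
      (∀ pp : ENNReal, 1 ≤ pp → Memℓp ustar pp ∧ Memℓp vstar pp) ∧
      (∀ u v : Lat n → ℝ, IsTopSol lam g h u v →
        (∀ x, u x ≤ ustar x) ∧ (∀ x, v x ≤ vstar x)) := by
  have g0 : ∀ x, 0 ≤ g x := fun x => by rw [hg]; exact source_nonneg m p x
  have h0 : ∀ x, 0 ≤ h x := fun x => by rw [hh]; exact source_nonneg nn q x
  have sg : Summable g := by rw [hg]; exact source_summable m p
  have sh : Summable h := by rw [hh]; exact source_summable nn q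
  obtain ⟨B, hB⟩ := exists_bound_zero hn hlam g0 h0 sg sh
  obtain ⟨U, tU, leU⟩ := tendsto_iter hlam zero_le_one g0 h0 (fun k x => (hB k x).1)
  obtain ⟨V, tV, leV⟩ := tendsto_iter hlam zero_le_one h0 g0 (fun k x => (hB k x).2)
  have sU : Summable U := summable_limit hlam g0 h0 sg sh hB tU fun x => leU 0 x
  have sV : Summable V := summable_limit hlam h0 g0 sh sg
    (fun k x => (hB k x).symm) tV fun x => leV 0 x
  refine ⟨fun x => -U x, fun x => -V x, ⟨?_, ?_, ?_, ?_⟩, ?_, ?_, ?_, ?_⟩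
  · intro x
    refine (fixed_iff hlam g (fun x => -U x) (fun x => -V x) x).1 ?_
    simpa only [neg_neg] using limit_fixed tU tV x
  · intro x
    refine (fixed_iff hlam h (fun x => -V x) (fun x => -U x) x).1 ?_
    simpa only [neg_neg] using limit_fixed tV tU x
  · rw [atInfty_eq_cofinite]; simpa using sU.tendsto_cofinite_zero.neg
  · rw [atInfty_eq_cofinite]; simpa using sV.tendsto_cofinite_zero.neg
  · exact fun x => neg_nonpos.2 (leU 0 x)
  · exact fun x => neg_nonpos.2 (leV 0 x)
  · exact fun pp hpp => ⟨memlp_of_summable sU hpp, memlp_of_summable sV hpp⟩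
  · rintro u v ⟨eu, ev, tu, tv⟩
    have u0 : ∀ x, 0 ≤ -u x := fun x => neg_nonneg.2 (nonpos_of_sol hlam g0 eu tu x)
    have v0 : ∀ x, 0 ≤ -v x := fun x => neg_nonneg.2 (nonpos_of_sol hlam h0 ev tv x)
    have fu := fun x => (fixed_iff hlam g u v x).2 (eu x)
    have fv := fun x => (fixed_iff hlam h v u x).2 (ev x)
    refine ⟨fun x => le_neg.2 ?_, fun x => le_neg.2 ?_⟩
    · exact le_of_tendsto' (tU x) fun k =>
        iter_le_fixed hlam zero_le_one k g0 h0 u0 v0 fu fv x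
    · exact le_of_tendsto' (tV x) fun k =>
        iter_le_fixed hlam zero_le_one k h0 g0 v0 u0 fv fu x

end CS
end
end

section
/- There exists a constant C_n > 0 depending only on the dimension n such that for every finite subset Ω ⊂ ℤⁿ, |δΩ| ≥ C_n |Ω|^{(n−1)/n}, where |K| denotes the cardinality of K. -/
/-!
The inequality holds with constant `1`, as a discrete Gagliardo–Nirenberg argument. Let `f` be the
indicator of `δΩ`, and give `ℤⁿ` the counting measure, a product of counting measures on `ℤ`. Every
axis-parallel line through a point of the finite set `Ω` leaves `Ω`, hence meets `δΩ`
(`exists_update_mem_bdry`), so all the line integrals of `f` through a point of `Ω` are at least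
`1`. The Loomis–Whitney type inequality `MeasureTheory.lintegral_prod_lintegral_pow_le` (the grid
lines lemma) then bounds `|Ω|` by `|δΩ| ^ (n / (n - 1))`.
-/

open Filter Real

noncomputable section

namespace CS

/-- The boundary δΩ = {y ∉ Ω : ∃ x ∈ Ω, x ~ y}. -/
def bdry {n : ℕ} (Ω : Set (Lat n)) : Set (Lat n) := {y | y ∉ Ω ∧ ∃ x ∈ Ω, adjacent x y}

lemma bdry_finite {n : ℕ} {Ω : Set (Lat n)} (hΩ : Ω.Finite) : (bdry Ω).Finite := by
  have hfin : (Set.Icc (-1 : Lat n) 1).Finite := Set.finite_Icc _ _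
  refine (Set.Finite.image2 (fun x z => x - z) hΩ hfin).subset ?_
  rintro y ⟨-, x, hx, hxy⟩
  have hcoord : ∀ i, (x i - y i).natAbs ≤ 1 := fun i => by
    have h := Finset.single_le_sum (f := fun i => (x i - y i).natAbs)
      (fun _ _ => Nat.zero_le _) (Finset.mem_univ i)
    unfold adjacent at hxy
    simpa [hxy] using h
  refine ⟨x, hx, x - y, ⟨fun i => ?_, fun i => ?_⟩, by simp⟩
  · have := hcoord i
    simp only [Pi.neg_apply, Pi.one_apply, Pi.sub_apply]
    omega
  · have := hcoord i
    simp only [Pi.one_apply, Pi.sub_apply]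
    omega

/-- Every axis-parallel line through a point of a finite set meets its boundary: step once past
the last point of the set on the line. -/
lemma exists_update_mem_bdry {n : ℕ} {Ω : Set (Lat n)} (hΩ : Ω.Finite) {x : Lat n} (hx : x ∈ Ω)
    (i : Fin n) : ∃ t : ℤ, Function.update x i t ∈ bdry Ω := by
  have hfin : {t : ℤ | Function.update x i t ∈ Ω}.Finite :=
    hΩ.preimage (Function.update_injective x i).injOn
  obtain ⟨t, ht, hmax⟩ := hfin.exists_maximalFor id _ ⟨x i, by simpa using hx⟩
  refine ⟨t + 1, fun h => ?_, Function.update x i t, ht, ?_⟩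
  · have := hmax h (by simp)
    simp at this
  · unfold adjacent
    rw [Finset.sum_eq_single i]
    · simp
    · intro j _ hj
      simp [Function.update_of_ne hj]
    · simp

open MeasureTheory in
lemma pi_count_apply {n : ℕ} {s : Set (Lat n)} (hs : s.Finite) :
    Measure.pi (fun _ : Fin n => (Measure.count : Measure ℤ)) s = (s.ncard : ENNReal) := by
  have h := sum_measure_singleton
    (μ := Measure.pi (fun _ : Fin n => (Measure.count : Measure ℤ))) (s := hs.toFinset)
  rw [hs.coe_toFinset] at h
  rw [← h, Set.ncard_eq_toFinset_card s hs]
  simp [Measure.pi_singleton]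

open MeasureTheory in
lemma ncard_le_bdry_rpow {n : ℕ} (hn : 2 ≤ n) {Ω : Set (Lat n)} (hΩ : Ω.Finite) :
    (Ω.ncard : ENNReal) ≤ ((bdry Ω).ncard : ENNReal) ^ ((n : ℝ) / ((n : ℝ) - 1)) := by
  have hn1 : (0 : ℝ) < (n : ℝ) - 1 := by
    have : (2 : ℝ) ≤ n := by exact_mod_cast hn
    linarith
  have hp : ((Fintype.card (Fin n) : ℕ) : ℝ).HolderConjugate ((n : ℝ) / ((n : ℝ) - 1)) := by
    rw [Fintype.card_fin]
    exact Real.HolderConjugate.conjExponent (by linarith)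
  have key := lintegral_prod_lintegral_pow_le (fun _ : Fin n => (Measure.count : Measure ℤ)) hp
    (f := (bdry Ω).indicator 1) (measurable_one.indicator (bdry_finite hΩ).measurableSet)
  rw [lintegral_indicator_one (bdry_finite hΩ).measurableSet, pi_count_apply (bdry_finite hΩ)]
    at key
  refine le_trans ?_ key
  rw [← pi_count_apply hΩ, ← lintegral_indicator_one hΩ.measurableSet]
  refine lintegral_mono fun x => ?_
  by_cases hx : x ∈ Ω
  · rw [Set.indicator_of_mem hx, Pi.one_apply]
    refine Finset.one_le_prod' fun i _ => ?_
    refine ENNReal.one_le_rpow ?_ (by rw [Fintype.card_fin]; positivity)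
    obtain ⟨t, ht⟩ := exists_update_mem_bdry hΩ hx i
    rw [lintegral_count]
    refine le_trans ?_ (ENNReal.le_tsum t)
    rw [Set.indicator_of_mem ht, Pi.one_apply]
  · simp [hx]

/-- isoperimetric inequality on ℤⁿ: there is a constant Cₙ > 0
depending only on n with |δΩ| ≥ Cₙ |Ω|^{(n−1)/n} for every finite Ω ⊂ ℤⁿ. -/
theorem isoperimetric_inequality
    {n : ℕ} (hn : 2 ≤ n) :
    ∃ C : ℝ, 0 < C ∧ ∀ Ω : Set (Lat n), Ω.Finite →
      C * (Ω.ncard : ℝ) ^ (((n : ℝ) - 1) / (n : ℝ)) ≤ ((bdry Ω).ncard : ℝ) := by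
  refine ⟨1, one_pos, fun Ω hΩ => ?_⟩
  have hn2 : (2 : ℝ) ≤ n := by exact_mod_cast hn
  have hp : 0 < (n : ℝ) / ((n : ℝ) - 1) := div_pos (by linarith) (by linarith)
  have h := ENNReal.toReal_mono (by finiteness) (ncard_le_bdry_rpow hn hΩ)
  rw [← ENNReal.toReal_rpow, ENNReal.toReal_natCast, ENNReal.toReal_natCast] at h
  rw [one_mul, ← inv_div, Real.rpow_inv_le_iff_of_pos (by positivity) (by positivity) hp]
  exact h

end CS
end
end

section
/- Let n ≥ 3. Then there exists a unique function u : ℤⁿ → ℝ satisfying Δu = δ₀ on ℤⁿ and u(x) → 0 as d(x) → +∞; moreover this function G_n is given by G_n(x) = −(2π)^{−n} ∫_{[−π,π]ⁿ} e^{i z·x} / (2n − 2∑_{j=1}^n cos z_j) dz for x ∈ ℤⁿ, z = (z₁,…,z_n) ∈ ℝⁿ. -/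
/-!
Existence. The symbol of `-Δ` is `symb z = 2n - 2 ∑ cos zⱼ`. On the torus `[-π, π]ⁿ` the bound
`1 - cos t ≥ 2t²/π²` and the AM-GM inequality give `symb z ≥ C ∏ |zⱼ|^(2/n)` (`symb_ge`), so
`1 / symb` is dominated by a product of one-variable functions `|zⱼ|^(-2/n)`, each integrable since
`2/n < 1` (`integrable_inv_symb`). Hence `Δ` may be applied under the integral defining the Fourier
formula `greenC`; it cancels the symbol, and orthogonality of characters yields `δ₀`
(`greenC_lapl`). Decay at infinity is the Riemann–Lebesgue lemma (`tendsto_greenC`).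

Uniqueness. A harmonic function on `ℤⁿ` vanishing at infinity is zero by the maximum principle
(`eq_zero_of_harmonic`). Applied to the difference of two solutions this gives uniqueness; applied
to the imaginary part of `greenC` it shows that the formula is real-valued.
-/

open Filter Real

noncomputable section

namespace CS

open MeasureTheory

/-! ### Maximum principle -/

/-- A harmonic function on `ℤⁿ` vanishing at infinity is nonpositive: a positive maximum would be
attained, and would propagate along a coordinate ray to infinity. -/
lemma nonpos_of_harmonic {n : ℕ} (hn : 0 < n) (u : Lat n → ℝ) (hu : ∀ x, lapl u x = 0)
    (h0 : Tendsto u (atInfty n) (nhds 0)) (a : Lat n) : u a ≤ 0 := by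
  by_contra! ha
  have hev := h0.eventually (gt_mem_nhds ha)
  rw [atInfty, eventually_comap] at hev
  obtain ⟨R, hR⟩ := eventually_atTop.1 hev
  have hfar : ∀ x, R ≤ latDist x → u x < u a := fun x hx => hR _ hx x rfl
  have hfin : {x | u a ≤ u x}.Finite := by
    refine (Set.finite_Icc (fun _ => -(R : ℤ)) (fun _ => (R : ℤ))).subset fun x hx => ?_
    have hx' : latDist x < R := by
      by_contra! h
      exact absurd (hfar x h) (not_lt.2 hx)
    have hi : ∀ i, (x i).natAbs < R := fun i =>
      (Finset.single_le_sum (f := fun i => (x i).natAbs) (fun _ _ => Nat.zero_le _)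
        (Finset.mem_univ i)).trans_lt hx'
    exact ⟨fun i => by have := hi i; simp only; omega, fun i => by have := hi i; simp only; omega⟩
  obtain ⟨m, hm, hmax⟩ := Set.exists_max_image _ u hfin ⟨a, le_refl (u a)⟩
  have hle : ∀ x, u x ≤ u m := fun x => by
    by_cases hx : u a ≤ u x
    · exact hmax x hx
    · exact (not_le.1 hx).le.trans hm
  let i₀ : Fin n := ⟨0, hn⟩
  have hstep : ∀ y, u y = u m → u (y + unitVec i₀) = u m := by
    intro y hy
    have hz := hu y
    have hnp : ∀ i ∈ Finset.univ, u (y + unitVec i) + u (y - unitVec i) - 2 * u y ≤ 0 := by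
      intro i _
      have h1 := hle (y + unitVec i)
      have h2 := hle (y - unitVec i)
      linarith
    have h3 := (Finset.sum_eq_zero_iff_of_nonpos hnp).1 hz i₀ (Finset.mem_univ _)
    have h1 := hle (y + unitVec i₀)
    have h2 := hle (y - unitVec i₀)
    linarith
  have hray : ∀ k : ℕ, u (m + k • unitVec i₀) = u m := by
    intro k
    induction k with
    | zero => simp
    | succ k ih =>
      rw [succ_nsmul, ← add_assoc]
      exact hstep _ ih
  have hd : R ≤ latDist (m + (R + (m i₀).natAbs) • unitVec i₀) := by
    refine le_trans ?_ (Finset.single_le_sum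
      (f := fun i => ((m + (R + (m i₀).natAbs) • unitVec i₀) i).natAbs)
      (fun _ _ => Nat.zero_le _) (Finset.mem_univ i₀))
    rw [Pi.add_apply, Pi.smul_apply, unitVec, if_pos rfl, nsmul_eq_mul, mul_one]
    omega
  have := hfar _ hd
  rw [hray] at this
  exact absurd this (not_lt.2 hm)

lemma eq_zero_of_harmonic {n : ℕ} (hn : 0 < n) (u : Lat n → ℝ) (hu : ∀ x, lapl u x = 0)
    (h0 : Tendsto u (atInfty n) (nhds 0)) (a : Lat n) : u a = 0 := by
  refine le_antisymm (nonpos_of_harmonic hn u hu h0 a) ?_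
  have h := nonpos_of_harmonic hn (fun x => -u x) (fun x => ?_) (by simpa using h0.neg) a
  · linarith
  · have := hu x
    simp only [lapl] at this ⊢
    rw [← neg_eq_zero, ← this, ← Finset.sum_neg_distrib]
    exact Finset.sum_congr rfl fun i _ => by ring

/-! ### Integrability of the inverse symbol -/

/-- The torus `[-π, π]ⁿ` as a box. -/
def box (n : ℕ) : Set (Fin n → ℝ) := Set.Icc (fun _ => -Real.pi) (fun _ => Real.pi)

/-- The symbol `2n - 2 ∑ cos zⱼ` of `-Δ`. -/
def symb {n : ℕ} (z : Fin n → ℝ) : ℝ := 2 * (n : ℝ) - 2 * ∑ j, Real.cos (z j)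

lemma volume_restrict_box (n : ℕ) : (volume : Measure (Fin n → ℝ)).restrict (box n) =
    Measure.pi fun _ => (volume : Measure ℝ).restrict (Set.Icc (-Real.pi) Real.pi) := by
  rw [box, ← Set.pi_univ_Icc, volume_pi, Measure.restrict_pi_pi]

lemma measurableSet_box (n : ℕ) : MeasurableSet (box n) := measurableSet_Icc

/-- Quadratic lower bound for the symbol, followed by the inequality of arithmetic and geometric
means. -/
lemma symb_ge {n : ℕ} (hn : 0 < n) {z : Fin n → ℝ} (hz : z ∈ box n) :
    4 * n / Real.pi ^ 2 * ∏ j, (z j ^ 2) ^ (1 / (n : ℝ)) ≤ symb z := by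
  have hn' : (0 : ℝ) < n := by exact_mod_cast hn
  have hpi := Real.pi_pos
  have h1 : ∏ j, (z j ^ 2) ^ (1 / (n : ℝ)) ≤ ∑ j, 1 / (n : ℝ) * z j ^ 2 :=
    Real.geom_mean_le_arith_mean_weighted Finset.univ (fun _ => 1 / (n : ℝ)) (fun j => z j ^ 2)
      (fun _ _ => by positivity) (by simp [hn'.ne']) (fun _ _ => by positivity)
  have h2 : ∑ j, Real.cos (z j) ≤ ∑ j, (1 - 2 / Real.pi ^ 2 * z j ^ 2) :=
    Finset.sum_le_sum fun j _ => Real.cos_le_one_sub_mul_cos_sq (abs_le.2 ⟨hz.1 j, hz.2 j⟩)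
  rw [Finset.sum_sub_distrib, ← Finset.mul_sum] at h2
  rw [← Finset.mul_sum] at h1
  have h3 := mul_le_mul_of_nonneg_left h1 (by positivity : 0 ≤ 4 * n / Real.pi ^ 2)
  refine h3.trans ?_
  have h4 : 4 * n / Real.pi ^ 2 * (1 / (n : ℝ) * ∑ j, z j ^ 2) =
      2 * (2 / Real.pi ^ 2 * ∑ j, z j ^ 2) := by
    field_simp
    ring
  rw [h4, symb]
  simp at h2
  linarith

lemma ae_ne_zero (n : ℕ) : ∀ᵐ z ∂((volume : Measure (Fin n → ℝ)).restrict (box n)),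
    ∀ j, z j ≠ 0 := by
  refine ae_restrict_of_ae (ae_all_iff.2 fun j => ?_)
  rw [volume_pi]
  exact Measure.ae_eval_ne _ j 0

/-- On the torus the symbol is positive off the coordinate hyperplanes, which are null sets. -/
lemma ae_symb_pos {n : ℕ} (hn : 0 < n) :
    ∀ᵐ z ∂((volume : Measure (Fin n → ℝ)).restrict (box n)), 0 < symb z := by
  filter_upwards [ae_ne_zero n, ae_restrict_mem (measurableSet_box n)] with z hz hb
  refine lt_of_lt_of_le ?_ (symb_ge hn hb)
  have hn' : (0 : ℝ) < n := by exact_mod_cast hn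
  have hpi := Real.pi_pos
  have : 0 < ∏ j, (z j ^ 2) ^ (1 / (n : ℝ)) := Finset.prod_pos fun j _ =>
    Real.rpow_pos_of_pos (by have := hz j; positivity) _
  positivity

/-- One-dimensional integrability: `|t|^(-2/n)` is integrable at `0` because `2/n < 1`. -/
lemma integrable_one_dim {n : ℕ} (hn : 3 ≤ n) :
    IntegrableOn (fun t : ℝ => ((t ^ 2) ^ (1 / (n : ℝ)))⁻¹) (Set.Icc (-Real.pi) Real.pi) := by
  have hn' : (3 : ℝ) ≤ n := by exact_mod_cast hn
  have hpi := Real.pi_pos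
  have h1 : IntervalIntegrable (fun t : ℝ => ((t ^ 2) ^ (1 / (n : ℝ)))⁻¹) volume 0 Real.pi := by
    have hr : -1 < -(2 / (n : ℝ)) := by
      rw [neg_lt_neg_iff, div_lt_one (by linarith)]
      linarith
    refine (intervalIntegral.intervalIntegrable_rpow' (a := 0) (b := Real.pi) hr).congr
      fun t ht => ?_
    rw [Set.uIoc_of_le hpi.le] at ht
    have ht0 : 0 ≤ t := ht.1.le
    rw [Real.rpow_neg ht0, ← Real.rpow_natCast, ← Real.rpow_mul ht0]
    congr 2
    push_cast
    ring
  have h2 : IntervalIntegrable (fun t : ℝ => ((t ^ 2) ^ (1 / (n : ℝ)))⁻¹) volume (-Real.pi) 0 := by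
    have := ((IntervalIntegrable.iff_comp_neg (by simp)).1 h1).symm
    simpa using this
  have := h2.trans h1
  rwa [intervalIntegrable_iff_integrableOn_Icc_of_le (by linarith)] at this

lemma continuous_symb (n : ℕ) : Continuous (symb : (Fin n → ℝ) → ℝ) := by
  unfold symb
  fun_prop

lemma integrable_inv_symb {n : ℕ} (hn : 3 ≤ n) :
    IntegrableOn (fun z : Fin n → ℝ => (symb z)⁻¹) (box n) := by
  have hn0 : 0 < n := by omega
  have hn' : (0 : ℝ) < n := by exact_mod_cast hn0
  have hpi := Real.pi_pos
  have hprod : IntegrableOn (fun z : Fin n → ℝ =>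
      (4 * n / Real.pi ^ 2)⁻¹ * ∏ j, ((z j ^ 2) ^ (1 / (n : ℝ)))⁻¹) (box n) := by
    rw [IntegrableOn, volume_restrict_box]
    exact (Integrable.fintype_prod fun _ => integrable_one_dim hn).const_mul _
  refine hprod.mono' (continuous_symb n).measurable.inv.aestronglyMeasurable ?_
  filter_upwards [ae_ne_zero n, ae_symb_pos hn0, ae_restrict_mem (measurableSet_box n)]
    with z hz hs hb
  have hp : 0 < ∏ j, (z j ^ 2) ^ (1 / (n : ℝ)) := Finset.prod_pos fun j _ =>
    Real.rpow_pos_of_pos (by have := hz j; positivity) _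
  rw [Real.norm_of_nonneg (inv_nonneg.2 hs.le), Finset.prod_inv_distrib, ← mul_inv]
  exact inv_anti₀ (by positivity) (symb_ge hn0 hb)

/-! ### Laplacian of the Fourier formula -/

/-- The integrand `e^{iz·x} / (2n - 2 ∑ cos zⱼ)`. -/
def integrand {n : ℕ} (x : Lat n) (z : Fin n → ℝ) : ℂ :=
  Complex.exp (Complex.I * ((∑ j, z j * (x j : ℝ) : ℝ) : ℂ)) /
    (2 * (n : ℂ) - 2 * ((∑ j, Real.cos (z j) : ℝ) : ℂ))

lemma integrand_eq {n : ℕ} (x : Lat n) (z : Fin n → ℝ) : integrand x z =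
    Complex.exp (Complex.I * ((∑ j, z j * (x j : ℝ) : ℝ) : ℂ)) * (((symb z)⁻¹ : ℝ) : ℂ) := by
  rw [integrand, div_eq_mul_inv, symb]
  push_cast
  rfl

/-- The complex-valued Fourier formula for the Green's function. -/
def greenC {n : ℕ} (x : Lat n) : ℂ :=
  -((((2 * Real.pi) ^ n : ℝ) : ℂ))⁻¹ * ∫ z in box n, integrand x z

lemma integrable_integrand {n : ℕ} (hn : 3 ≤ n) (x : Lat n) :
    IntegrableOn (integrand x) (box n) := by
  have h : Integrable (fun z => (((symb z)⁻¹ : ℝ) : ℂ)) (volume.restrict (box n)) :=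
    (integrable_inv_symb hn).ofReal
  refine (h.bdd_mul (c := 1)
    (f := fun z => Complex.exp (Complex.I * ((∑ j, z j * (x j : ℝ) : ℝ) : ℂ))) ?_ ?_).congr ?_
  · exact (by fun_prop : Continuous fun z : Fin n → ℝ =>
      Complex.exp (Complex.I * ((∑ j, z j * (x j : ℝ) : ℝ) : ℂ))).aestronglyMeasurable
  · exact ae_of_all _ fun z => by rw [mul_comm, Complex.norm_exp_ofReal_mul_I]
  · exact ae_of_all _ fun z => (integrand_eq x z).symm

lemma integral_exp_one_dim (k : ℤ) :
    ∫ t in Set.Icc (-Real.pi) Real.pi, Complex.exp (Complex.I * ((t * (k : ℝ) : ℝ) : ℂ)) =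
      if k = 0 then ((2 * Real.pi : ℝ) : ℂ) else 0 := by
  have hpi := Real.pi_pos
  rw [integral_Icc_eq_integral_Ioc, ← intervalIntegral.integral_of_le (by linarith)]
  split_ifs with hk
  · subst hk
    simp
    ring
  · have hc : (Complex.I * k : ℂ) ≠ 0 := by simp [hk]
    have : ∀ t : ℝ, Complex.exp (Complex.I * ((t * (k : ℝ) : ℝ) : ℂ)) =
        Complex.exp ((Complex.I * k) * t) := fun t => by
      push_cast
      ring_nf
    simp_rw [this]
    rw [integral_exp_mul_complex hc, div_eq_zero_iff, sub_eq_zero]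
    left
    rw [Complex.exp_eq_exp_iff_exists_int]
    exact ⟨k, by push_cast; ring⟩

/-- Orthogonality of characters on the torus. -/
lemma integral_exp_box {n : ℕ} (x : Lat n) :
    ∫ z in box n, Complex.exp (Complex.I * ((∑ j, z j * (x j : ℝ) : ℝ) : ℂ)) =
      (((2 * Real.pi) ^ n : ℝ) : ℂ) * (dirac 0 x : ℝ) := by
  have h : ∀ z : Fin n → ℝ, Complex.exp (Complex.I * ((∑ j, z j * (x j : ℝ) : ℝ) : ℂ)) =
      ∏ j, Complex.exp (Complex.I * ((z j * (x j : ℝ) : ℝ) : ℂ)) := fun z => by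
    rw [← Complex.exp_sum, ← Finset.mul_sum]
    push_cast
    rfl
  simp_rw [h]
  rw [volume_restrict_box, integral_fintype_prod_eq_prod
    (f := fun j t => Complex.exp (Complex.I * ((t * (x j : ℝ) : ℝ) : ℂ)))]
  simp_rw [integral_exp_one_dim]
  rw [dirac]
  split_ifs with hx
  · subst hx
    simp
  · obtain ⟨j, hj⟩ := Function.ne_iff.1 hx
    rw [Finset.prod_eq_zero (Finset.mem_univ j) (if_neg hj)]
    simp

lemma sum_mul_unitVec {n : ℕ} (z : Fin n → ℝ) (i : Fin n) :
    ∑ j, z j * ((unitVec i j : ℤ) : ℝ) = z i := by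
  simp [unitVec]

/-- As a function of `x`, the integrand is an eigenfunction of `Δ` with eigenvalue `-symb z`,
which cancels the denominator. -/
lemma integrand_lapl {n : ℕ} (x : Lat n) {z : Fin n → ℝ} (hz : symb z ≠ 0) :
    ∑ i, (integrand (x + unitVec i) z + integrand (x - unitVec i) z - 2 * integrand x z) =
      -Complex.exp (Complex.I * ((∑ j, z j * (x j : ℝ) : ℝ) : ℂ)) := by
  have hadd : ∀ i, ∑ j, z j * (((x + unitVec i) j : ℤ) : ℝ) = (∑ j, z j * (x j : ℝ)) + z i := by
    intro i
    rw [← sum_mul_unitVec z i, ← Finset.sum_add_distrib]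
    exact Finset.sum_congr rfl fun j _ => by simp [mul_add]
  have hsub : ∀ i, ∑ j, z j * (((x - unitVec i) j : ℤ) : ℝ) = (∑ j, z j * (x j : ℝ)) - z i := by
    intro i
    rw [← sum_mul_unitVec z i, ← Finset.sum_sub_distrib]
    exact Finset.sum_congr rfl fun j _ => by simp [mul_sub]
  simp_rw [integrand_eq, hadd, hsub]
  set s := ∑ j, z j * (x j : ℝ)
  have hterm : ∀ i, Complex.exp (Complex.I * ((s + z i : ℝ) : ℂ)) * (((symb z)⁻¹ : ℝ) : ℂ) +
      Complex.exp (Complex.I * ((s - z i : ℝ) : ℂ)) * (((symb z)⁻¹ : ℝ) : ℂ) -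
      2 * (Complex.exp (Complex.I * (s : ℂ)) * (((symb z)⁻¹ : ℝ) : ℂ)) =
      (2 * ((Real.cos (z i) : ℝ) : ℂ) - 2) *
        (Complex.exp (Complex.I * (s : ℂ)) * (((symb z)⁻¹ : ℝ) : ℂ)) := by
    intro i
    have e1 : Complex.I * ((s + z i : ℝ) : ℂ) = Complex.I * s + z i * Complex.I := by
      push_cast
      ring
    have e2 : Complex.I * ((s - z i : ℝ) : ℂ) = Complex.I * s + -z i * Complex.I := by
      push_cast
      ring
    rw [e1, e2, Complex.exp_add, Complex.exp_add, Complex.ofReal_cos, Complex.two_cos]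
    ring
  simp_rw [hterm]
  rw [← Finset.sum_mul]
  have hs : ∑ i, (2 * ((Real.cos (z i) : ℝ) : ℂ) - 2) = -((symb z : ℝ) : ℂ) := by
    rw [symb, Finset.sum_sub_distrib, ← Finset.mul_sum]
    simp
    ring
  have hz' : ((symb z : ℝ) : ℂ) ≠ 0 := by exact_mod_cast hz
  rw [hs]
  push_cast
  field_simp

lemma greenC_lapl {n : ℕ} (hn : 3 ≤ n) (x : Lat n) :
    ∑ i, (greenC (x + unitVec i) + greenC (x - unitVec i) - 2 * greenC x) =
      ((dirac 0 x : ℝ) : ℂ) := by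
  have hI := fun y : Lat n => integrable_integrand hn y
  have h1 : ∑ i, ((∫ z in box n, integrand (x + unitVec i) z) +
      (∫ z in box n, integrand (x - unitVec i) z) - 2 * ∫ z in box n, integrand x z) =
      -((((2 * Real.pi) ^ n : ℝ) : ℂ) * (dirac 0 x : ℝ)) := by
    rw [← integral_exp_box, ← integral_neg]
    have h2 : ∀ i, (∫ z in box n, integrand (x + unitVec i) z) +
        (∫ z in box n, integrand (x - unitVec i) z) - 2 * ∫ z in box n, integrand x z =
        ∫ z in box n, (integrand (x + unitVec i) z + integrand (x - unitVec i) z -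
          2 * integrand x z) := fun i => by
      rw [← integral_const_mul, ← integral_add (hI _) (hI _)]
      exact (integral_sub ((hI _).add (hI _)) ((hI _).const_mul 2)).symm
    simp_rw [h2]
    refine (integral_finsetSum _ fun i _ =>
      ((hI _).add (hI _)).sub ((hI _).const_mul 2)).symm.trans ?_
    refine integral_congr_ae ?_
    filter_upwards [ae_symb_pos (n := n) (by omega)] with z hz
    exact integrand_lapl x hz.ne'
  have hpi : (((2 * Real.pi) ^ n : ℝ) : ℂ) ≠ 0 := by
    have := Real.pi_pos
    exact_mod_cast (by positivity : (2 * Real.pi) ^ n ≠ 0)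
  calc _ = -((((2 * Real.pi) ^ n : ℝ) : ℂ))⁻¹ *
      ∑ i, ((∫ z in box n, integrand (x + unitVec i) z) +
      (∫ z in box n, integrand (x - unitVec i) z) - 2 * ∫ z in box n, integrand x z) := by
        rw [Finset.mul_sum]
        exact Finset.sum_congr rfl fun i _ => by simp only [greenC]; ring
    _ = _ := by
        rw [h1]
        field_simp

/-! ### Decay at infinity -/

/-- The functional `z ↦ -(z·x)/(2π)`; the factor matches the normalisation `e^{2πit}` of
`Real.fourierChar`. -/
def freq {n : ℕ} (x : Lat n) : StrongDual ℝ (Fin n → ℝ) :=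
  ∑ j, (-(x j : ℝ) / (2 * Real.pi)) • ContinuousLinearMap.proj (R := ℝ) (φ := fun _ => ℝ) j

lemma freq_apply {n : ℕ} (x : Lat n) (z : Fin n → ℝ) :
    freq x z = -(∑ j, z j * (x j : ℝ)) / (2 * Real.pi) := by
  simp only [freq, sum_apply, smul_apply,
    ContinuousLinearMap.proj_apply, smul_eq_mul]
  rw [← Finset.sum_neg_distrib, Finset.sum_div]
  exact Finset.sum_congr rfl fun j _ => by ring

/-- Testing against the sign vector of `x` gives `‖freq x‖ ≥ d(x)/(2π)`. -/
lemma tendsto_freq (n : ℕ) :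
    Tendsto (freq : Lat n → _) (atInfty n) (cocompact (StrongDual ℝ (Fin n → ℝ))) := by
  have hpi := Real.pi_pos
  rw [← Metric.cobounded_eq_cocompact, ← tendsto_norm_atTop_iff_cobounded]
  have hd : Tendsto (fun x : Lat n => (latDist x : ℝ) / (2 * Real.pi)) (atInfty n) atTop :=
    (tendsto_natCast_atTop_atTop.comp tendsto_comap).atTop_div_const (by positivity)
  refine tendsto_atTop_mono (fun x => ?_) hd
  let σ : Fin n → ℝ := fun j => -((x j).sign : ℝ)
  have hσ : ‖σ‖ ≤ 1 := by
    refine (pi_norm_le_iff_of_nonneg zero_le_one).2 fun j => ?_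
    rcases lt_trichotomy (x j) 0 with h | h | h
    · simp [σ, Int.sign_eq_neg_one_of_neg h]
    · simp [σ, h]
    · simp [σ, Int.sign_eq_one_of_pos h]
  have hval : freq x σ = (latDist x : ℝ) / (2 * Real.pi) := by
    rw [freq_apply, ← Finset.sum_neg_distrib, latDist]
    congr 1
    push_cast
    refine Finset.sum_congr rfl fun j _ => ?_
    have h : ((x j).sign : ℝ) * (x j : ℝ) = (((x j).natAbs : ℤ) : ℝ) := by
      rw [← Int.sign_mul_self_eq_natAbs, Int.cast_mul]
    rw [Int.cast_natCast] at h
    simp only [σ]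
    linarith
  calc (latDist x : ℝ) / (2 * Real.pi) = freq x σ := hval.symm
    _ ≤ ‖freq x σ‖ := Real.le_norm_self _
    _ ≤ ‖freq x‖ * ‖σ‖ := (freq x).le_opNorm _
    _ ≤ ‖freq x‖ * 1 := by gcongr
    _ = ‖freq x‖ := mul_one _

/-- Decay at infinity, by the Riemann–Lebesgue lemma. -/
lemma tendsto_greenC (n : ℕ) : Tendsto (greenC : Lat n → ℂ) (atInfty n) (nhds 0) := by
  have hpi := Real.pi_pos
  have h := (tendsto_integral_exp_smul_cocompact
    ((box n).indicator fun z : Fin n → ℝ => (((symb z)⁻¹ : ℝ) : ℂ)) volume).comp (tendsto_freq n)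
  have h2 := h.const_mul (-((((2 * Real.pi) ^ n : ℝ) : ℂ))⁻¹)
  rw [mul_zero] at h2
  refine h2.congr fun x => ?_
  rw [greenC, ← integral_indicator (measurableSet_box n)]
  congr 1
  refine integral_congr_ae (ae_of_all _ fun z => ?_)
  by_cases hz : z ∈ box n
  · simp only [Set.indicator_of_mem hz]
    rw [integrand_eq, Circle.smul_def, Real.fourierChar_apply, freq_apply, smul_eq_mul]
    congr 2
    rw [mul_comm Complex.I]
    congr 2
    field_simp
  · simp [Set.indicator_of_notMem hz]

/-! ### Existence, uniqueness and formula -/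

/-- for n ≥ 3 there is a unique function on ℤⁿ with Δu = δ₀ and
u → 0 at infinity (the Green's function Gₙ), and it is given by
Gₙ(x) = −(2π)⁻ⁿ ∫_{[−π,π]ⁿ} e^{iz·x} / (2n − 2∑ⱼ cos zⱼ) dz. -/
theorem green_function_existence_uniqueness_formula
    {n : ℕ} (hn : 3 ≤ n) :
    (∃! G : Lat n → ℝ,
      (∀ x, lapl G x = dirac 0 x) ∧ Filter.Tendsto G (atInfty n) (nhds 0)) ∧
    (∀ G : Lat n → ℝ,
      ((∀ x, lapl G x = dirac 0 x) ∧ Filter.Tendsto G (atInfty n) (nhds 0)) →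
      ∀ x : Lat n, (G x : ℂ)
        = -((((2 * Real.pi) ^ n : ℝ) : ℂ))⁻¹ *
            ∫ z : Fin n → ℝ in Set.Icc (fun _ => -Real.pi) (fun _ => Real.pi),
              Complex.exp (Complex.I * ((∑ j, z j * (x j : ℝ) : ℝ) : ℂ)) /
                (2 * (n : ℂ) - 2 * ((∑ j, Real.cos (z j) : ℝ) : ℂ))) := by
  have hn0 : 0 < n := by omega
  have hre_lapl : ∀ x, lapl (fun x : Lat n => (greenC x).re) x = dirac 0 x := fun x => by
    have := congrArg Complex.re (greenC_lapl hn x)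
    rw [Complex.re_sum, Complex.ofReal_re] at this
    rw [← this, lapl]
    exact Finset.sum_congr rfl fun i _ => by simp
  have him_lapl : ∀ x, lapl (fun x : Lat n => (greenC x).im) x = 0 := fun x => by
    have := congrArg Complex.im (greenC_lapl hn x)
    rw [Complex.im_sum, Complex.ofReal_im] at this
    rw [← this, lapl]
    exact Finset.sum_congr rfl fun i _ => by simp
  have hre_lim : Tendsto (fun x : Lat n => (greenC x).re) (atInfty n) (nhds 0) := by
    simpa [Function.comp_def] using (Complex.continuous_re.tendsto 0).comp (tendsto_greenC n)
  have him_lim : Tendsto (fun x : Lat n => (greenC x).im) (atInfty n) (nhds 0) := by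
    simpa [Function.comp_def] using (Complex.continuous_im.tendsto 0).comp (tendsto_greenC n)
  -- The formula is real-valued: its imaginary part is harmonic and vanishes at infinity.
  have him := eq_zero_of_harmonic hn0 _ him_lapl him_lim
  have huniq : ∀ G : Lat n → ℝ,
      ((∀ x, lapl G x = dirac 0 x) ∧ Tendsto G (atInfty n) (nhds 0)) →
      ∀ x, G x = (greenC x).re := by
    rintro G ⟨hG, hG0⟩ x
    refine sub_eq_zero.1 (eq_zero_of_harmonic hn0 (fun x => G x - (greenC x).re) (fun y => ?_)
      (by simpa using hG0.sub hre_lim) x)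
    have h := congrArg₂ (· - ·) (hG y) (hre_lapl y)
    simp only [lapl, sub_self] at h ⊢
    rw [← h, ← Finset.sum_sub_distrib]
    exact Finset.sum_congr rfl fun i _ => by ring
  refine ⟨⟨_, ⟨hre_lapl, hre_lim⟩, fun G hG => funext (huniq G hG)⟩, fun G hG x => ?_⟩
  rw [huniq G hG x]
  exact Complex.ext (Complex.ofReal_re _) ((Complex.ofReal_im _).trans (him x).symm)

end CS
end
end
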